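/- arXiv:1810.05707 — 2 statements merged into one kernel-verified Lean document; each statement's English description precedes it below -/
import Mathlib

section
/- Fix 1 < p < ∞, natural numbers l_1,…,l_{d+1}, and let T be the (l_1,…,l_{d+1}) interval tree with levels Λ_0,…,Λ_{d+1}. Suppose 0 < Δ, μ, ν < 1, M > 1, m ∈ ℕ, λ, Θ > 0, and (s_I)_{I∈T} ⊂ (0,∞) are such that (i) s_I ≤ ∑_{J⁻=I} s_J for each I ∈ T \ Λ_{d+1}; (ii) max_{I∈Λ_j} s_I ≤ M·min_{I∈Λ_j} s_I for all 0 ≤ j ≤ d; (iii) s_{[L]}^p > (1−ν/2)·(Θ^p/λ^p)·(∏_{i=1}^{d+1} l_i^{p−1})·∑_{I∈Λ_{d+1}} s_I^p; and (iv) (1−μΔ/M^p)^m < (1−ν/2)·Θ^p/λ^p. For each 0 ≤ j < d let I_j = {I ∈ Λ_j : s_I^p ≤ (1−μ)·l_{j+1}^{p−1}·∑_{J⁻=I} s_J^p} and let B = {j < d : |I_j| ≥ Δ·|Λ_j|}. Then |B| ≤ m. -/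
open Finset

noncomputable section

/-!
The `(l 1, …, l (d+1))` interval tree is encoded as follows: the nodes at level `j`
(for `0 ≤ j ≤ d+1`) are indexed by the natural numbers `k < levN l j`, where
`levN l j = l 1 * ⋯ * l j` is the cardinality of the `j`-th level `Λ_j`.  The children of the
node `k` at level `j` are the nodes `k * l (j+1) + t`, `t < l (j+1)`, at level `j+1`, and the
root (the interval `[L]`) is the node `0` at level `0`.  A family `(x_I)_{I ∈ T}` of reals
indexed by the tree is encoded as `x : ℕ → ℕ → ℝ`, with `x j k` the value at node `k` of
level `j`.
-/

/-- Cardinality of the `j`-th level `Λ_j` of the interval tree. -/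
def levN (l : ℕ → ℕ) (j : ℕ) : ℕ := ∏ i ∈ Finset.Icc 1 j, l i

/-- `∑_{J⁻ = I} x_J`, the sum of `x` over the children of node `k` at level `j`. -/
def childSum (l : ℕ → ℕ) (x : ℕ → ℕ → ℝ) (j k : ℕ) : ℝ :=
  ∑ t ∈ Finset.range (l (j + 1)), x (j + 1) (k * l (j + 1) + t)

/-- `∑_{J⁻ = I} x_J ^ p`, the sum of `x^p` over the children of node `k` at level `j`. -/
def childSumPow (l : ℕ → ℕ) (x : ℕ → ℕ → ℝ) (p : ℝ) (j k : ℕ) : ℝ :=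
  ∑ t ∈ Finset.range (l (j + 1)), x (j + 1) (k * l (j + 1) + t) ^ p

/-!
Put `A_j = (∏_{i ≤ j} l_i^(p-1)) * ∑_{I ∈ Λ_j} s_I^p`. By (i) and Hölder's inequality,
`s_I^p ≤ l_{j+1}^(p-1) * ∑_{J⁻ = I} s_J^p` for every `I ∈ Λ_j`; summing over the level gives
`A_j ≤ A_{j+1}`. If `j ∈ B`, a `Δ`-fraction of these inequalities gains a factor `1 - μ`. By (ii) on
level `j + 1`, their right-hand sides agree up to a factor `M^p`, so the nodes with a gain carry at
least a `Δ / M^p` fraction of the total, and `A_j ≤ (1 - μ Δ / M^p) A_{j+1}`. Hence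
`A_0 ≤ (1 - μ Δ / M^p)^|B| A_{d+1}`, whereas (iii) and (iv) give
`(1 - μ Δ / M^p)^m A_{d+1} < A_0`.
-/

section FinsetSums

variable {ι κ R : Type*}

lemma card_nsmul_sum_le_card_nsmul_sum [AddCommMonoid R] [PartialOrder R] [IsOrderedAddMonoid R]
    {A : Finset ι} {S : Finset κ} {f : ι → R} {g : κ → R}
    (h : ∀ i ∈ A, ∀ j ∈ S, f i ≤ g j) :
    #S • ∑ i ∈ A, f i ≤ #A • ∑ j ∈ S, g j :=
  calc #S • ∑ i ∈ A, f i = ∑ i ∈ A, ∑ _j ∈ S, f i := by simp only [sum_const, sum_nsmul]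
    _ ≤ ∑ _i ∈ A, ∑ j ∈ S, g j := sum_le_sum fun i hi => sum_le_sum fun j hj => h i hi j hj
    _ = #A • ∑ j ∈ S, g j := sum_const _

lemma sum_le_sum_sub_mul_sum_of_gain [CommRing R] [PartialOrder R] [IsOrderedRing R]
    {A S : Finset ι} (hS : S ⊆ A) {a c : ι → R} {μ : R}
    (hac : ∀ i ∈ A, a i ≤ c i) (hgain : ∀ i ∈ S, a i ≤ (1 - μ) * c i) :
    ∑ i ∈ A, a i ≤ ∑ i ∈ A, c i - μ * ∑ i ∈ S, c i := by
  classical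
  calc ∑ i ∈ A, a i = ∑ i ∈ A \ S, a i + ∑ i ∈ S, a i := (sum_sdiff hS).symm
    _ ≤ ∑ i ∈ A \ S, c i + ∑ i ∈ S, (1 - μ) * c i :=
      add_le_add (sum_le_sum fun i hi => hac i (sdiff_subset hi)) (sum_le_sum hgain)
    _ = ∑ i ∈ A, c i - μ * ∑ i ∈ S, c i := by rw [← sum_sdiff hS, ← mul_sum]; ring

variable [Field R] [LinearOrder R] [IsStrictOrderedRing R]

lemma mul_sum_le_mul_sum_of_comparable {A S : Finset ι} (hS : S ⊆ A) {c : ι → R} {Δ K : R}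
    (hc : ∀ i ∈ A, 0 ≤ c i) (hcomp : ∀ i ∈ A, ∀ j ∈ A, c i ≤ K * c j) (hcard : Δ * #A ≤ #S) :
    Δ * ∑ i ∈ A, c i ≤ K * ∑ i ∈ S, c i := by
  obtain rfl | hA := A.eq_empty_or_nonempty
  · simp [subset_empty.1 hS]
  have hcount : (#S : R) * ∑ i ∈ A, c i ≤ #A * (K * ∑ i ∈ S, c i) := by
    simpa only [nsmul_eq_mul, mul_sum] using
      card_nsmul_sum_le_card_nsmul_sum fun i hi j hj => hcomp i hi j (hS hj)
  refine le_of_mul_le_mul_left ?_ (Nat.cast_pos (α := R).2 hA.card_pos)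
  calc (#A : R) * (Δ * ∑ i ∈ A, c i) = Δ * #A * ∑ i ∈ A, c i := by ring
    _ ≤ #S * ∑ i ∈ A, c i := mul_le_mul_of_nonneg_right hcard (sum_nonneg hc)
    _ ≤ #A * (K * ∑ i ∈ S, c i) := hcount

lemma sum_le_one_sub_mul_sum_of_gain {A S : Finset ι} (hS : S ⊆ A) {a c : ι → R} {Δ μ K : R}
    (hμ : 0 ≤ μ) (hK : 0 < K) (hc : ∀ i ∈ A, 0 ≤ c i) (hac : ∀ i ∈ A, a i ≤ c i)
    (hgain : ∀ i ∈ S, a i ≤ (1 - μ) * c i) (hcomp : ∀ i ∈ A, ∀ j ∈ A, c i ≤ K * c j)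
    (hcard : Δ * #A ≤ #S) :
    ∑ i ∈ A, a i ≤ (1 - μ * Δ / K) * ∑ i ∈ A, c i := by
  have hfraction : Δ / K * ∑ i ∈ A, c i ≤ ∑ i ∈ S, c i := by
    rw [div_mul_eq_mul_div, div_le_iff₀' hK]
    exact mul_sum_le_mul_sum_of_comparable hS hc hcomp hcard
  calc ∑ i ∈ A, a i ≤ ∑ i ∈ A, c i - μ * ∑ i ∈ S, c i :=
      sum_le_sum_sub_mul_sum_of_gain hS hac hgain
    _ ≤ ∑ i ∈ A, c i - μ * (Δ / K * ∑ i ∈ A, c i) := by gcongr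
    _ = (1 - μ * Δ / K) * ∑ i ∈ A, c i := by ring

end FinsetSums

lemma sum_range_mul {R : Type*} [AddCommMonoid R] (f : ℕ → R) (m n : ℕ) :
    ∑ k ∈ range (m * n), f k = ∑ k ∈ range m, ∑ t ∈ range n, f (k * n + t) := by
  induction m with
  | zero => simp
  | succ m ih => rw [Nat.succ_mul, sum_range_add, ih, sum_range_succ]

lemma le_pow_card_filter_mul {R : Type*} [CommSemiring R] [PartialOrder R] [IsOrderedRing R]
    {E : ℕ → R} {q : R} {n : ℕ} (P : ℕ → Prop) [DecidablePred P] (hq : 0 ≤ q)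
    (hmono : ∀ j < n, E j ≤ E (j + 1)) (hgain : ∀ j < n, P j → E j ≤ q * E (j + 1)) :
    E 0 ≤ q ^ #{j ∈ range n | P j} * E n := by
  induction n with
  | zero => simp
  | succ n ih =>
    refine (ih (fun j hj => hmono j (by omega)) fun j hj => hgain j (by omega)).trans ?_
    rw [range_add_one, filter_insert]
    split_ifs with hP
    · rw [card_insert_of_notMem (by simp), pow_succ, mul_assoc]
      exact mul_le_mul_of_nonneg_left (hgain n n.lt_succ_self hP) (pow_nonneg hq _)
    · exact mul_le_mul_of_nonneg_left (hmono n n.lt_succ_self) (pow_nonneg hq _)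

/-- The bound `l_{j+1}^(p-1) * ∑_{J⁻ = I} s_J^p` that Hölder's inequality gives for `s_I^p`, where
`I` is the node `k` of level `j`. -/
def holderBound (l : ℕ → ℕ) (s : ℕ → ℕ → ℝ) (p : ℝ) (j k : ℕ) : ℝ :=
  (l (j + 1) : ℝ) ^ (p - 1) * childSumPow l s p j k

/-- The normalised `p`-energy `A_j = (∏_{i ≤ j} l_i^(p-1)) * ∑_{I ∈ Λ_j} s_I^p` of level `j`; the
normalisation makes it monotone in `j` for a family satisfying (i). -/
def levelEnergy (l : ℕ → ℕ) (s : ℕ → ℕ → ℝ) (p : ℝ) (j : ℕ) : ℝ :=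
  (∏ i ∈ Icc 1 j, (l i : ℝ) ^ (p - 1)) * ∑ k ∈ range (levN l j), s j k ^ p

/-- The set `I_j` of nodes of level `j` at which Hölder's inequality gains a factor `1 - μ`. -/
def gainNodes (l : ℕ → ℕ) (s : ℕ → ℕ → ℝ) (p μ : ℝ) (j : ℕ) : Finset ℕ :=
  {k ∈ range (levN l j) | s j k ^ p ≤ (1 - μ) * (l (j + 1) : ℝ) ^ (p - 1) * childSumPow l s p j k}

/-- The set `B` of levels `j < d` on which `I_j` makes up at least a `Δ`-fraction of `Λ_j`. -/
def gainLevels (l : ℕ → ℕ) (s : ℕ → ℕ → ℝ) (p μ Δ : ℝ) (d : ℕ) : Finset ℕ :=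
  {j ∈ range d | Δ * (levN l j : ℝ) ≤ #(gainNodes l s p μ j)}

section IntervalTree

variable {l : ℕ → ℕ} {s : ℕ → ℕ → ℝ} {p Δ μ M : ℝ} {d j k k' : ℕ}

lemma levN_succ : levN l (j + 1) = levN l j * l (j + 1) :=
  prod_Icc_succ_top (by omega) l

lemma child_lt_levN {t : ℕ} (hk : k < levN l j) (ht : t < l (j + 1)) :
    k * l (j + 1) + t < levN l (j + 1) :=
  calc k * l (j + 1) + t < (k + 1) * l (j + 1) := by rw [add_one_mul]; omega
    _ ≤ levN l j * l (j + 1) := Nat.mul_le_mul_right _ hk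
    _ = levN l (j + 1) := levN_succ.symm

lemma rpow_le_holderBound (hp : 1 ≤ p) (hs : 0 ≤ s j k)
    (hs' : ∀ k < levN l (j + 1), 0 ≤ s (j + 1) k) (hk : k < levN l j)
    (hsum : s j k ≤ childSum l s j k) :
    s j k ^ p ≤ holderBound l s p j k :=
  calc s j k ^ p ≤ childSum l s j k ^ p := Real.rpow_le_rpow hs hsum (by linarith)
    _ ≤ holderBound l s p j k := by
      simpa only [childSum, holderBound, childSumPow, card_range] using
        Real.rpow_sum_le_const_mul_sum_rpow_of_nonneg (range (l (j + 1))) hp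
          fun t ht => hs' _ (child_lt_levN hk (mem_range.1 ht))

lemma holderBound_le_mul_holderBound (hp : 0 ≤ p) (hM : 0 ≤ M)
    (hs' : ∀ k < levN l (j + 1), 0 ≤ s (j + 1) k)
    (hcomp : ∀ k < levN l (j + 1), ∀ k' < levN l (j + 1), s (j + 1) k ≤ M * s (j + 1) k')
    (hk : k < levN l j) (hk' : k' < levN l j) :
    holderBound l s p j k ≤ M ^ p * holderBound l s p j k' := by
  unfold holderBound childSumPow
  rw [mul_left_comm, mul_sum (a := M ^ p)]
  gcongr with t ht
  have hchild := child_lt_levN hk (mem_range.1 ht)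
  have hchild' := child_lt_levN hk' (mem_range.1 ht)
  rw [← Real.mul_rpow hM (hs' _ hchild')]
  exact Real.rpow_le_rpow (hs' _ hchild) (hcomp _ hchild _ hchild') hp

lemma levelEnergy_zero : levelEnergy l s p 0 = s 0 0 ^ p := by
  simp [levelEnergy, levN]

lemma levelEnergy_nonneg (hs : ∀ k < levN l j, 0 ≤ s j k) : 0 ≤ levelEnergy l s p j :=
  mul_nonneg (by positivity)
    (sum_nonneg fun k hk => Real.rpow_nonneg (hs k (mem_range.1 hk)) p)

lemma levelEnergy_succ :
    levelEnergy l s p (j + 1) = (∏ i ∈ Icc 1 j, (l i : ℝ) ^ (p - 1)) *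
      ∑ k ∈ range (levN l j), holderBound l s p j k := by
  unfold levelEnergy holderBound childSumPow
  rw [prod_Icc_succ_top (by omega), levN_succ, sum_range_mul, ← mul_sum, mul_assoc]

lemma levelEnergy_le_succ (hp : 1 ≤ p) (hs : ∀ k < levN l j, 0 ≤ s j k)
    (hs' : ∀ k < levN l (j + 1), 0 ≤ s (j + 1) k)
    (hsum : ∀ k < levN l j, s j k ≤ childSum l s j k) :
    levelEnergy l s p j ≤ levelEnergy l s p (j + 1) := by
  rw [levelEnergy_succ, levelEnergy]
  gcongr with k hk
  have hk := mem_range.1 hk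
  exact rpow_le_holderBound hp (hs k hk) hs' hk (hsum k hk)

lemma levelEnergy_le_mul_succ_of_gain (hp : 1 ≤ p) (hμ : 0 ≤ μ) (hM : 0 < M)
    (hs : ∀ k < levN l j, 0 ≤ s j k) (hs' : ∀ k < levN l (j + 1), 0 ≤ s (j + 1) k)
    (hsum : ∀ k < levN l j, s j k ≤ childSum l s j k)
    (hcomp : ∀ k < levN l (j + 1), ∀ k' < levN l (j + 1), s (j + 1) k ≤ M * s (j + 1) k')
    (hgain : Δ * (levN l j : ℝ) ≤ #(gainNodes l s p μ j)) :
    levelEnergy l s p j ≤ (1 - μ * Δ / M ^ p) * levelEnergy l s p (j + 1) := by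
  have hholder : ∀ k ∈ range (levN l j), s j k ^ p ≤ holderBound l s p j k := fun k hk =>
    rpow_le_holderBound hp (hs k (mem_range.1 hk)) hs' (mem_range.1 hk) (hsum k (mem_range.1 hk))
  have hnonneg : ∀ k ∈ range (levN l j), 0 ≤ holderBound l s p j k := fun k hk =>
    (Real.rpow_nonneg (hs k (mem_range.1 hk)) p).trans (hholder k hk)
  have hnodes : ∀ k ∈ gainNodes l s p μ j, s j k ^ p ≤ (1 - μ) * holderBound l s p j k :=
    fun k hk => (mem_filter.1 hk).2.trans_eq (mul_assoc _ _ _)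
  rw [levelEnergy_succ, levelEnergy, mul_left_comm]
  gcongr
  exact sum_le_one_sub_mul_sum_of_gain (filter_subset _ _) hμ (Real.rpow_pos_of_pos hM p) hnonneg
    hholder hnodes (fun k hk k' hk' => holderBound_le_mul_holderBound (by linarith) hM.le hs' hcomp
      (mem_range.1 hk) (mem_range.1 hk')) (by rwa [card_range])

lemma levelEnergy_zero_le_pow_mul (hp : 1 ≤ p) (hμ : 0 ≤ μ) (hM : 0 < M)
    (hq : 0 ≤ 1 - μ * Δ / M ^ p) (hs : ∀ j ≤ d + 1, ∀ k < levN l j, 0 ≤ s j k)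
    (hsum : ∀ j ≤ d, ∀ k < levN l j, s j k ≤ childSum l s j k)
    (hcomp : ∀ j < d, ∀ k < levN l (j + 1), ∀ k' < levN l (j + 1),
      s (j + 1) k ≤ M * s (j + 1) k') :
    levelEnergy l s p 0 ≤
      (1 - μ * Δ / M ^ p) ^ #(gainLevels l s p μ Δ d) * levelEnergy l s p (d + 1) := by
  have hmono : ∀ j ≤ d, levelEnergy l s p j ≤ levelEnergy l s p (j + 1) := fun j hj =>
    levelEnergy_le_succ hp (hs j (by omega)) (hs (j + 1) (by omega)) (hsum j hj)
  calc levelEnergy l s p 0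
      ≤ (1 - μ * Δ / M ^ p) ^ #(gainLevels l s p μ Δ d) * levelEnergy l s p d :=
        le_pow_card_filter_mul _ hq (fun j hj => hmono j hj.le) fun j hj =>
          levelEnergy_le_mul_succ_of_gain hp hμ hM (hs j (by omega)) (hs (j + 1) (by omega))
            (hsum j hj.le) (hcomp j hj)
    _ ≤ _ := mul_le_mul_of_nonneg_left (hmono d le_rfl) (pow_nonneg hq _)

theorem goodX_lemma_general {c : ℝ} {m : ℕ} (hp : 1 ≤ p) (hΔ : 0 ≤ Δ) (hΔ1 : Δ ≤ 1) (hμ : 0 ≤ μ)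
    (hμ1 : μ ≤ 1) (hM : 1 ≤ M) (hs : ∀ j ≤ d + 1, ∀ k < levN l j, 0 ≤ s j k)
    (hsum : ∀ j ≤ d, ∀ k < levN l j, s j k ≤ childSum l s j k)
    (hcomp : ∀ j < d, ∀ k < levN l (j + 1), ∀ k' < levN l (j + 1),
      s (j + 1) k ≤ M * s (j + 1) k')
    (hroot : c * levelEnergy l s p (d + 1) < s 0 0 ^ p) (hc : (1 - μ * Δ / M ^ p) ^ m ≤ c) :
    #(gainLevels l s p μ Δ d) < m := by
  have hMp : 1 ≤ M ^ p := Real.one_le_rpow hM (by linarith)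
  have hq0 : 0 ≤ 1 - μ * Δ / M ^ p :=
    sub_nonneg.2 (div_le_one_of_le₀ ((mul_le_one₀ hμ1 hΔ hΔ1).trans hMp) (by linarith))
  have hq1 : 1 - μ * Δ / M ^ p ≤ 1 := sub_le_self _ (by positivity)
  have hE : 0 ≤ levelEnergy l s p (d + 1) := levelEnergy_nonneg (hs (d + 1) le_rfl)
  have hlt : (1 - μ * Δ / M ^ p) ^ m * levelEnergy l s p (d + 1) <
      (1 - μ * Δ / M ^ p) ^ #(gainLevels l s p μ Δ d) * levelEnergy l s p (d + 1) :=
    calc (1 - μ * Δ / M ^ p) ^ m * levelEnergy l s p (d + 1)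
        ≤ c * levelEnergy l s p (d + 1) := mul_le_mul_of_nonneg_right hc hE
      _ < levelEnergy l s p 0 := hroot.trans_eq levelEnergy_zero.symm
      _ ≤ _ := levelEnergy_zero_le_pow_mul hp hμ (by linarith) hq0 hs hsum hcomp
  exact lt_of_not_ge fun hm =>
    (lt_of_mul_lt_mul_right hlt hE).not_ge (pow_le_pow_of_le_one hq0 hq1 hm)

end IntervalTree

open Classical in
/-- Lemma 3.4 (coarse-differentiation-type lemma): the number of levels on which a
`Δ`-fraction of the nodes are "bad" is at most `m`. -/
theorem goodX_lemma (p : ℝ) (hp : 1 < p) (d : ℕ) (l : ℕ → ℕ)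
    (hl : ∀ i ∈ Finset.Icc 1 (d + 1), 0 < l i)
    (Δ μ ν : ℝ) (hΔ : 0 < Δ) (hΔ1 : Δ < 1) (hμ : 0 < μ) (hμ1 : μ < 1)
    (hν : 0 < ν) (hν1 : ν < 1)
    (M : ℝ) (hM : 1 < M) (m : ℕ) (lam Θ : ℝ) (hlam : 0 < lam) (hΘ : 0 < Θ)
    (s : ℕ → ℕ → ℝ)
    (hpos : ∀ j ≤ d + 1, ∀ k < levN l j, 0 < s j k)
    (h1 : ∀ j ≤ d, ∀ k < levN l j, s j k ≤ childSum l s j k)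
    (h2 : ∀ j ≤ d, ∀ k < levN l j, ∀ k' < levN l j, s j k ≤ M * s j k')
    (h3 : s 0 0 ^ p > (1 - ν / 2) * (Θ ^ p / lam ^ p) *
      (∏ i ∈ Finset.Icc 1 (d + 1), (l i : ℝ) ^ (p - 1)) *
      ∑ k ∈ Finset.range (levN l (d + 1)), s (d + 1) k ^ p)
    (h4 : (1 - μ * Δ / M ^ p) ^ m < (1 - ν / 2) * Θ ^ p / lam ^ p) :
    ((Finset.range d).filter fun j =>
        Δ * (levN l j : ℝ) ≤
          (((Finset.range (levN l j)).filter fun k =>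
            s j k ^ p ≤ (1 - μ) * (l (j + 1) : ℝ) ^ (p - 1) * childSumPow l s p j k).card : ℝ)).card
      ≤ m := by
  have hroot : (1 - ν / 2) * (Θ ^ p / lam ^ p) * levelEnergy l s p (d + 1) < s 0 0 ^ p := by
    rwa [levelEnergy, ← mul_assoc]
  exact (goodX_lemma_general hp.le hΔ.le hΔ1.le hμ.le hμ1.le hM.le
    (fun j hj k hk => (hpos j hj k hk).le) h1 (fun j hj => h2 (j + 1) hj) hroot
    (h4.trans_eq (mul_div_assoc _ _ _)).le).le
end
end

section
/- If 𝓕 is a uniformly Lipschitz family of maps between metric spaces, i.e. sup_{F∈𝓕} Lip(F) ∈ (0,∞), then the sequence (a_n(𝓕))_{n=1}^∞ converges and lim_n a_n(𝓕) = inf_n a_n(𝓕). -/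
/-!
The sequence `n * a_n(𝓕)` is subadditive, so Fekete's lemma applies. To see this, go from a point
`(ε, δ)` of `2^(m+n) = 2^m × 2^n` to its antipode through `(-ε, δ)`. Each of the two legs joins
antipodal points of a slice of `f`, a copy of `2^m` or `2^n`. A Hamming distance in `2^m` is
multiplied by `m / (m + n)` when it is measured in `2^(m+n)`, so the slices have Lipschitz constants
at most `m / (m + n) * Lip f` and `n / (m + n) * Lip f`. Averaging the triangle inequality yields
`(m + n) * a_(m+n) ≤ m * a_m + n * a_n`.
-/

open Finset

noncomputable section

/-- Normalized Hamming distance on the cube `{±1}^n` (modeled as `Fin n → Bool`). -/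
def hdist (n : ℕ) (ε δ : Fin n → Bool) : ℝ :=
  ((Finset.univ.filter fun i => ε i ≠ δ i).card : ℝ) / n

/-- `-ε`: flip all coordinates. -/
def negCube {n : ℕ} (ε : Fin n → Bool) : Fin n → Bool := fun i => !(ε i)

/-- `d_i ε`: flip the `i`-th coordinate. -/
def flipCoord {n : ℕ} (i : Fin n) (ε : Fin n → Bool) : Fin n → Bool :=
  Function.update ε i (!(ε i))

/-- Expectation with respect to the uniform probability measure on the cube. -/
def cubeE (n : ℕ) (Φ : (Fin n → Bool) → ℝ) : ℝ :=
  (∑ ε : Fin n → Bool, Φ ε) / 2 ^ n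

/-- Lipschitz constant of a map from the cube (with metric `hdist`) into a metric space,
with the convention `0 / 0 = 0`. -/
def cubeLip {n : ℕ} {X : Type} [MetricSpace X] (f : (Fin n → Bool) → X) : ℝ :=
  sSup { r : ℝ | ∃ ε δ, r = dist (f ε) (f δ) / hdist n ε δ }

/-- A map between (bundled) metric spaces. -/
structure MetricMap where
  X : Type
  Y : Type
  mX : MetricSpace X
  mY : MetricSpace Y
  F : X → Y

attribute [instance] MetricMap.mX MetricMap.mY

/-- `a_n(𝓕)`: infimum of those `a > 0` such that for each `F : X → Y` in `𝓕` and each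
`f : 2^n → X`, `𝔼 ϱ_Y^f(ε,−ε) ≤ a·Lip(f)`. -/
def aConst (𝓕 : Set MetricMap) (n : ℕ) : ℝ :=
  sInf { a : ℝ | 0 < a ∧ ∀ G ∈ 𝓕, ∀ f : (Fin n → Bool) → G.X,
    cubeE n (fun ε => dist (G.F (f ε)) (G.F (f (negCube ε)))) ≤ a * cubeLip f }

/-- `b_{p,n}(𝓕)`: infimum of those `b > 0` such that for each `F : X → Y` in `𝓕` and each
`f : 2^n → X`, `𝔼 ϱ_Y^f(ε,−ε)^p ≤ b^p n^{p−1} ∑_i 𝔼 ϱ_X^f(ε,d_iε)^p`. -/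
def bConst (𝓕 : Set MetricMap) (p : ℝ) (n : ℕ) : ℝ :=
  sInf { b : ℝ | 0 < b ∧ ∀ G ∈ 𝓕, ∀ f : (Fin n → Bool) → G.X,
    cubeE n (fun ε => dist (G.F (f ε)) (G.F (f (negCube ε))) ^ p)
      ≤ b ^ p * (n : ℝ) ^ (p - 1) *
        ∑ i : Fin n, cubeE n (fun ε => dist (f ε) (f (flipCoord i ε)) ^ p) }

section Fekete

variable {u : ℕ → ℝ}

lemma subadditive_lim_eq_iInf (hu : Subadditive u) : hu.lim = ⨅ n : ℕ, u (n + 1) / (n + 1 : ℕ) := by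
  rw [Subadditive.lim, iInf]
  congr 1
  ext x
  constructor
  · rintro ⟨n, hn, rfl⟩
    exact ⟨n - 1, by simp only [Nat.sub_add_cancel hn]⟩
  · rintro ⟨n, rfl⟩
    exact ⟨n + 1, n.succ_pos, rfl⟩

lemma tendsto_div_iInf_of_subadditive (hu : Subadditive u)
    (hbdd : BddBelow (Set.range fun n : ℕ => u n / n)) :
    Filter.Tendsto (fun n : ℕ => u (n + 1) / (n + 1 : ℕ)) Filter.atTop
      (nhds (⨅ n : ℕ, u (n + 1) / (n + 1 : ℕ))) := by
  rw [← subadditive_lim_eq_iInf hu]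
  exact (hu.tendsto_lim hbdd).comp (Filter.tendsto_add_atTop_nat 1)

end Fekete

section Expectation

variable {m n : ℕ}

lemma cubeE_mono {Φ Ψ : (Fin n → Bool) → ℝ} (h : ∀ ε, Φ ε ≤ Ψ ε) : cubeE n Φ ≤ cubeE n Ψ := by
  unfold cubeE
  gcongr with ε
  exact h ε

lemma cubeE_const (n : ℕ) (c : ℝ) : cubeE n (fun _ => c) = c := by
  simp [cubeE]

lemma cubeE_le_of_forall_le {Φ : (Fin n → Bool) → ℝ} {c : ℝ} (h : ∀ ε, Φ ε ≤ c) :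
    cubeE n Φ ≤ c :=
  (cubeE_mono h).trans_eq (cubeE_const n c)

lemma cubeE_add (Φ Ψ : (Fin n → Bool) → ℝ) :
    cubeE n (fun ε => Φ ε + Ψ ε) = cubeE n Φ + cubeE n Ψ := by
  simp only [cubeE, sum_add_distrib, add_div]

lemma cubeE_comm (Φ : (Fin m → Bool) → (Fin n → Bool) → ℝ) :
    cubeE m (fun ε => cubeE n fun δ => Φ ε δ) = cubeE n fun δ => cubeE m fun ε => Φ ε δ := by
  simp only [cubeE, ← sum_div]
  rw [sum_comm, div_right_comm]

lemma cubeE_append (Φ : (Fin (m + n) → Bool) → ℝ) :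
    cubeE (m + n) Φ = cubeE m fun ε => cubeE n fun δ => Φ (Fin.append ε δ) := by
  simp only [cubeE, ← sum_div, div_div, ← pow_add, add_comm n m]
  rw [← (Fin.appendEquiv m n).sum_comp, Fintype.sum_prod_type]
  rfl

lemma negCube_involutive : Function.Involutive (negCube : (Fin n → Bool) → Fin n → Bool) :=
  fun ε => by ext i; simp [negCube]

lemma cubeE_comp_negCube (Φ : (Fin n → Bool) → ℝ) : cubeE n (fun ε => Φ (negCube ε)) = cubeE n Φ :=
  congrArg (· / 2 ^ n) (negCube_involutive.bijective.sum_comp Φ)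

lemma negCube_append (ε : Fin m → Bool) (δ : Fin n → Bool) :
    negCube (Fin.append ε δ) = Fin.append (negCube ε) (negCube δ) := by
  ext i
  refine Fin.addCases (fun i => ?_) (fun i => ?_) i <;> simp [negCube]

end Expectation

section HammingDistance

variable {m n : ℕ}

lemma hammingDist_append {α : Type*} [DecidableEq α] (x x' : Fin m → α) (y y' : Fin n → α) :
    hammingDist (Fin.append x y) (Fin.append x' y') = hammingDist x x' + hammingDist y y' := by
  simp only [hammingDist, card_filter, Fin.sum_univ_add, Fin.append_left, Fin.append_right]

lemma hdist_eq_hammingDist_div (ε δ : Fin n → Bool) : hdist n ε δ = (hammingDist ε δ : ℝ) / n :=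
  rfl

lemma hdist_nonneg (ε δ : Fin n → Bool) : 0 ≤ hdist n ε δ := by
  unfold hdist
  positivity

lemma hdist_self (ε : Fin n → Bool) : hdist n ε ε = 0 := by
  simp [hdist]

lemma hdist_pos {ε δ : Fin n → Bool} (h : ε ≠ δ) : 0 < hdist n ε δ := by
  obtain ⟨i, -⟩ := Function.ne_iff.1 h
  exact div_pos (Nat.cast_pos.2 (hammingDist_pos.2 h)) (Nat.cast_pos.2 i.pos)

lemma hdist_le_one (ε δ : Fin n → Bool) : hdist n ε δ ≤ 1 := by
  have hcard : hammingDist ε δ ≤ n := by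
    simpa only [Fintype.card_fin] using hammingDist_le_card_fintype (x := ε) (y := δ)
  exact div_le_one_of_le₀ (Nat.cast_le.2 hcard) n.cast_nonneg

lemma natCast_mul_hdist (ε δ : Fin n → Bool) : n * hdist n ε δ = hammingDist ε δ := by
  rcases n.eq_zero_or_pos with rfl | hn
  · simp [Subsingleton.elim ε δ]
  · rw [hdist_eq_hammingDist_div, mul_div_cancel₀]
    positivity

lemma hdist_append (ε ε' : Fin m → Bool) (δ δ' : Fin n → Bool) :
    hdist (m + n) (Fin.append ε δ) (Fin.append ε' δ') =
      (m * hdist m ε ε' + n * hdist n δ δ') / (m + n) := by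
  rw [hdist_eq_hammingDist_div, hammingDist_append, natCast_mul_hdist, natCast_mul_hdist]
  push_cast
  rfl

end HammingDistance

section LipschitzConstant

variable {m n : ℕ} {X : Type} [MetricSpace X]

lemma cubeLip_nonneg (f : (Fin n → Bool) → X) : 0 ≤ cubeLip f := by
  refine Real.sSup_nonneg ?_
  rintro r ⟨ε, δ, rfl⟩
  exact div_nonneg dist_nonneg (hdist_nonneg ε δ)

lemma cubeLip_le {f : (Fin n → Bool) → X} {C : ℝ} (hC : 0 ≤ C)
    (h : ∀ ε δ, dist (f ε) (f δ) ≤ C * hdist n ε δ) : cubeLip f ≤ C := by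
  refine Real.sSup_le ?_ hC
  rintro r ⟨ε, δ, rfl⟩
  exact div_le_of_le_mul₀ (hdist_nonneg ε δ) hC (h ε δ)

lemma dist_le_cubeLip_mul_hdist (f : (Fin n → Bool) → X) (ε δ : Fin n → Bool) :
    dist (f ε) (f δ) ≤ cubeLip f * hdist n ε δ := by
  rcases eq_or_ne ε δ with rfl | h
  · simp [hdist_self]
  have hfin : {r : ℝ | ∃ ε δ, r = dist (f ε) (f δ) / hdist n ε δ}.Finite := by
    refine (Set.finite_range fun p : (Fin n → Bool) × (Fin n → Bool) =>
      dist (f p.1) (f p.2) / hdist n p.1 p.2).subset ?_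
    rintro r ⟨ε, δ, rfl⟩
    exact ⟨(ε, δ), rfl⟩
  rw [← div_le_iff₀ (hdist_pos h)]
  exact le_csSup hfin.bddAbove ⟨ε, δ, rfl⟩

lemma dist_le_cubeLip (f : (Fin n → Bool) → X) (ε δ : Fin n → Bool) :
    dist (f ε) (f δ) ≤ cubeLip f :=
  (dist_le_cubeLip_mul_hdist f ε δ).trans
    (mul_le_of_le_one_right (cubeLip_nonneg f) (hdist_le_one ε δ))

lemma cubeLip_comp_le (f : (Fin n → Bool) → X) {φ : (Fin m → Bool) → Fin n → Bool} {c : ℝ}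
    (hc : 0 ≤ c) (hφ : ∀ ε ε', hdist n (φ ε) (φ ε') ≤ c * hdist m ε ε') :
    cubeLip (fun ε => f (φ ε)) ≤ c * cubeLip f := by
  have hf := cubeLip_nonneg f
  refine cubeLip_le (mul_nonneg hc hf) fun ε ε' => ?_
  calc dist (f (φ ε)) (f (φ ε'))
      ≤ cubeLip f * hdist n (φ ε) (φ ε') := dist_le_cubeLip_mul_hdist f _ _
    _ ≤ cubeLip f * (c * hdist m ε ε') := by gcongr; exact hφ ε ε'
    _ = c * cubeLip f * hdist m ε ε' := by ring

lemma cubeLip_append_left_le (f : (Fin (m + n) → Bool) → X) (δ : Fin n → Bool) :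
    cubeLip (fun ε => f (Fin.append ε δ)) ≤ m / (m + n) * cubeLip f :=
  cubeLip_comp_le f (by positivity) fun ε ε' => le_of_eq <| by
    rw [hdist_append, hdist_self]
    ring

lemma cubeLip_append_right_le (f : (Fin (m + n) → Bool) → X) (ε : Fin m → Bool) :
    cubeLip (fun δ => f (Fin.append ε δ)) ≤ n / (m + n) * cubeLip f :=
  cubeLip_comp_le f (by positivity) fun δ δ' => le_of_eq <| by
    rw [hdist_append, hdist_self]
    ring

end LipschitzConstant

section AntipodalMean

variable {m n : ℕ}

/-- The mean antipodal distance `𝔼 d(g(ε), g(-ε))` of a map on the cube. The left-hand side of the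
inequality defining `aConst` is this mean for `g = F ∘ f`. -/
def antipodalMean {Y : Type*} [PseudoMetricSpace Y] (g : (Fin n → Bool) → Y) : ℝ :=
  cubeE n fun ε => dist (g ε) (g (negCube ε))

lemma antipodalMean_append_le {Y : Type*} [PseudoMetricSpace Y] (g : (Fin (m + n) → Bool) → Y) :
    antipodalMean g ≤ (cubeE n fun δ => antipodalMean fun ε => g (Fin.append ε δ)) +
      cubeE m fun ε => antipodalMean fun δ => g (Fin.append ε δ) := by
  let first (ε : Fin m → Bool) (δ : Fin n → Bool) : ℝ :=
    dist (g (Fin.append ε δ)) (g (Fin.append (negCube ε) δ))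
  let second (ε : Fin m → Bool) (δ : Fin n → Bool) : ℝ :=
    dist (g (Fin.append ε δ)) (g (Fin.append ε (negCube δ)))
  calc antipodalMean g
      = cubeE m fun ε => cubeE n fun δ =>
          dist (g (Fin.append ε δ)) (g (Fin.append (negCube ε) (negCube δ))) := by
        simp only [antipodalMean, cubeE_append, negCube_append]
    _ ≤ cubeE m fun ε => cubeE n fun δ => first ε δ + second (negCube ε) δ :=
        cubeE_mono fun _ => cubeE_mono fun _ => dist_triangle _ _ _
    _ = (cubeE m fun ε => cubeE n fun δ => first ε δ) +
          cubeE m fun ε => cubeE n fun δ => second (negCube ε) δ := by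
        simp only [cubeE_add]
    _ = (cubeE n fun δ => cubeE m fun ε => first ε δ) +
          cubeE m fun ε => cubeE n fun δ => second ε δ :=
        congrArg₂ (· + ·) (cubeE_comm first) (cubeE_comp_negCube fun ε => cubeE n (second ε))

end AntipodalMean

/-- The admissible constants whose infimum is `aConst 𝓕 n`. -/
def antipodalBounds (𝓕 : Set MetricMap) (n : ℕ) : Set ℝ :=
  {a : ℝ | 0 < a ∧ ∀ G ∈ 𝓕, ∀ f : (Fin n → Bool) → G.X,
    antipodalMean (fun ε => G.F (f ε)) ≤ a * cubeLip f}

section AntipodalBounds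

open scoped Pointwise

variable {𝓕 : Set MetricMap} {m n : ℕ}

lemma aConst_eq_sInf (𝓕 : Set MetricMap) (n : ℕ) : aConst 𝓕 n = sInf (antipodalBounds 𝓕 n) :=
  rfl

lemma bddBelow_antipodalBounds (𝓕 : Set MetricMap) (n : ℕ) : BddBelow (antipodalBounds 𝓕 n) :=
  ⟨0, fun _ ha => ha.1.le⟩

lemma aConst_nonneg (𝓕 : Set MetricMap) (n : ℕ) : 0 ≤ aConst 𝓕 n :=
  Real.sInf_nonneg fun _ ha => ha.1.le

lemma mem_antipodalBounds_of_lipschitz {lam : ℝ} (hlam : 0 < lam)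
    (hLip : ∀ G ∈ 𝓕, ∀ x y : G.X, dist (G.F x) (G.F y) ≤ lam * dist x y) (n : ℕ) :
    lam ∈ antipodalBounds 𝓕 n := by
  refine ⟨hlam, fun G hG f => cubeE_le_of_forall_le fun ε => ?_⟩
  exact (hLip G hG _ _).trans (mul_le_mul_of_nonneg_left (dist_le_cubeLip f _ _) hlam.le)

lemma weightedMean_mem_antipodalBounds (hmn : 0 < m + n) {a b : ℝ}
    (ha : a ∈ antipodalBounds 𝓕 m) (hb : b ∈ antipodalBounds 𝓕 n) :
    (m * a + n * b) / (m + n) ∈ antipodalBounds 𝓕 (m + n) := by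
  obtain ⟨ha_pos, ha⟩ := ha
  obtain ⟨hb_pos, hb⟩ := hb
  refine ⟨?_, fun G hG f => ?_⟩
  · rcases Nat.add_pos_iff_pos_or_pos.1 hmn with h | h <;> positivity
  have hleft (δ : Fin n → Bool) :
      antipodalMean (fun ε => G.F (f (Fin.append ε δ))) ≤ a * (m / (m + n) * cubeLip f) :=
    (ha G hG _).trans (mul_le_mul_of_nonneg_left (cubeLip_append_left_le f δ) ha_pos.le)
  have hright (ε : Fin m → Bool) :
      antipodalMean (fun δ => G.F (f (Fin.append ε δ))) ≤ b * (n / (m + n) * cubeLip f) :=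
    (hb G hG _).trans (mul_le_mul_of_nonneg_left (cubeLip_append_right_le f ε) hb_pos.le)
  calc antipodalMean (fun ε => G.F (f ε))
      ≤ (cubeE n fun δ => antipodalMean fun ε => G.F (f (Fin.append ε δ))) +
          cubeE m fun ε => antipodalMean fun δ => G.F (f (Fin.append ε δ)) :=
        antipodalMean_append_le _
    _ ≤ a * (m / (m + n) * cubeLip f) + b * (n / (m + n) * cubeLip f) :=
        add_le_add (cubeE_le_of_forall_le hleft) (cubeE_le_of_forall_le hright)
    _ = (m * a + n * b) / (m + n) * cubeLip f := by ring

lemma add_mul_aConst_le {a b : ℝ} (ha : a ∈ antipodalBounds 𝓕 m) (hb : b ∈ antipodalBounds 𝓕 n) :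
    ((m + n : ℕ) : ℝ) * aConst 𝓕 (m + n) ≤ m * a + n * b := by
  rcases (m + n).eq_zero_or_pos with h | h
  · obtain ⟨rfl, rfl⟩ := Nat.add_eq_zero_iff.1 h
    simp
  · rw [← le_div_iff₀' (Nat.cast_pos.2 h), Nat.cast_add]
    exact csInf_le (bddBelow_antipodalBounds 𝓕 (m + n)) (weightedMean_mem_antipodalBounds h ha hb)

lemma subadditive_mul_aConst (hne : ∀ n, (antipodalBounds 𝓕 n).Nonempty) :
    Subadditive fun n => n * aConst 𝓕 n := by
  intro m n
  have hbdd (k : ℕ) : BddBelow ((k : ℝ) • antipodalBounds 𝓕 k) :=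
    (bddBelow_antipodalBounds 𝓕 k).smul_of_nonneg k.cast_nonneg
  have hsInf : sInf ((m : ℝ) • antipodalBounds 𝓕 m + (n : ℝ) • antipodalBounds 𝓕 n) =
      m * aConst 𝓕 m + n * aConst 𝓕 n := by
    rw [csInf_add (hne m).smul_set (hbdd m) (hne n).smul_set (hbdd n),
      Real.sInf_smul_of_nonneg m.cast_nonneg, Real.sInf_smul_of_nonneg n.cast_nonneg,
      ← aConst_eq_sInf, ← aConst_eq_sInf, smul_eq_mul, smul_eq_mul]
  rw [← hsInf]
  refine le_csInf ((hne m).smul_set.add (hne n).smul_set) ?_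
  rintro _ ⟨_, ⟨a, ha, rfl⟩, _, ⟨b, hb, rfl⟩, rfl⟩
  exact add_mul_aConst_le ha hb

end AntipodalBounds

/-- For a uniformly Lipschitz family `𝓕`, the sequence `(a_n(𝓕))_{n ≥ 1}` converges to its
infimum. -/
theorem aConst_tendsto_iInf (𝓕 : Set MetricMap) (lam : ℝ) (hlam : 0 < lam)
    (hLip : ∀ G ∈ 𝓕, ∀ x y : G.X, dist (G.F x) (G.F y) ≤ lam * dist x y) :
    Filter.Tendsto (fun n : ℕ => aConst 𝓕 (n + 1)) Filter.atTop
      (nhds (⨅ n : ℕ, aConst 𝓕 (n + 1))) := by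
  have hsub : Subadditive fun n => n * aConst 𝓕 n :=
    subadditive_mul_aConst fun n => ⟨lam, mem_antipodalBounds_of_lipschitz hlam hLip n⟩
  have hbdd : BddBelow (Set.range fun n : ℕ => n * aConst 𝓕 n / n) := by
    refine ⟨0, ?_⟩
    rintro _ ⟨n, rfl⟩
    exact div_nonneg (mul_nonneg n.cast_nonneg (aConst_nonneg 𝓕 n)) n.cast_nonneg
  have hdiv (n : ℕ) : ((n + 1 : ℕ) : ℝ) * aConst 𝓕 (n + 1) / (n + 1 : ℕ) = aConst 𝓕 (n + 1) :=
    mul_div_cancel_left₀ _ (Nat.cast_ne_zero.2 n.succ_ne_zero)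
  simpa only [hdiv] using tendsto_div_iInf_of_subadditive hsub hbdd
end
end
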